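/- Suppose the bipolar max-product fuzzy relation equation max_{j=1..m} max(a_j^+ · x_j, a_j^- · n_P(x_j)) = 0 is solvable (equivalently, for each j, either a_j^+ = 0 or a_j^- = 0). Then the tuple (x̂_1,...,x̂_m) defined by x̂_j = 1 if a_j^+ = 0 and x̂_j = 0 if a_j^+ ≠ 0 (in which case a_j^- = 0) is the greatest solution of the equation: it is a solution and every solution (x_1,...,x_m) satisfies x_j ≤ x̂_j for all j. -/

import Mathlib

open Finset
open scoped Classical

/-- Product negation: `nP 0 = 1`, `nP x = 0` for `x ≠ 0`. -/
noncomputable def nP (x : ℝ) : ℝ := if x = 0 then 1 else 0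

/-- Residuated implication of the product: `resP z x = min 1 (z / x)` for `x > 0`,
and `resP z 0 = 1`. -/
noncomputable def resP (z x : ℝ) : ℝ := if x = 0 then 1 else min 1 (z / x)

/-- Left-hand side of a bipolar max-product fuzzy relation equation:
`max_{j=1..m} max (a_j^+ * x_j) (a_j^- * nP (x_j))`. -/
noncomputable def eqLHS {m : ℕ} (hm : 0 < m) (ap an : Fin m → ℝ) (x : Fin m → ℝ) : ℝ :=
  Finset.univ.sup' ⟨⟨0, hm⟩, Finset.mem_univ _⟩
    (fun j => max (ap j * x j) (an j * nP (x j)))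

/-- `x` is a solution of the bipolar max-product FRE with independent term `b`. -/
def IsSol {m : ℕ} (hm : 0 < m) (ap an : Fin m → ℝ) (b : ℝ) (x : Fin m → ℝ) : Prop :=
  (∀ j, x j ∈ Set.Icc (0:ℝ) 1) ∧ eqLHS hm ap an x = b

/-! For `b = 0` and nonnegative `ap` the maximum vanishes iff no term is positive, so the equation
decouples: coordinate `j` only has to be `0` where `ap j ≠ 0`, and nonzero where `0 < an j`.
Solvability says that no coordinate carries both demands, and then the greatest solution takes
the largest admissible value in each coordinate. -/

lemma mul_nP_nonpos_iff {a x : ℝ} : a * nP x ≤ 0 ↔ (x = 0 → a ≤ 0) := by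
  by_cases hx : x = 0 <;> simp [nP, hx]

section

variable {m : ℕ} {hm : 0 < m} {ap an x : Fin m → ℝ}

lemma eqLHS_le_iff {c : ℝ} :
    eqLHS hm ap an x ≤ c ↔ ∀ j, ap j * x j ≤ c ∧ an j * nP (x j) ≤ c :=
  (Finset.sup'_le_iff _ _).trans (by simp only [Finset.mem_univ, forall_const, max_le_iff])

lemma eqLHS_nonneg (hap : 0 ≤ ap) (hx : 0 ≤ x) : 0 ≤ eqLHS hm ap an x :=
  (mul_nonneg (hap ⟨0, hm⟩) (hx ⟨0, hm⟩)).trans (eqLHS_le_iff.1 le_rfl ⟨0, hm⟩).1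

lemma eqLHS_eq_zero_iff (hap : 0 ≤ ap) (hx : 0 ≤ x) :
    eqLHS hm ap an x = 0 ↔ ∀ j, (ap j = 0 ∨ x j = 0) ∧ (x j = 0 → an j ≤ 0) := by
  have mul_nonpos_iff_eq_zero (j : Fin m) : ap j * x j ≤ 0 ↔ ap j = 0 ∨ x j = 0 := by
    rw [(mul_nonneg (hap j) (hx j)).ge_iff_eq', mul_eq_zero]
  rw [← (eqLHS_nonneg hap hx).ge_iff_eq', eqLHS_le_iff]
  simp only [mul_nonpos_iff_eq_zero, mul_nP_nonpos_iff]

lemma isSol_zero_iff (hap : 0 ≤ ap) :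
    IsSol hm ap an 0 x ↔
      (∀ j, x j ∈ Set.Icc (0 : ℝ) 1) ∧ ∀ j, (ap j = 0 ∨ x j = 0) ∧ (x j = 0 → an j ≤ 0) :=
  and_congr_right fun hx => eqLHS_eq_zero_iff hap fun j => (hx j).1

/-- The tuple `x̂`, the greatest solution of the equation with independent term `0` when there
is one. -/
noncomputable def greatestZeroSol (ap : Fin m → ℝ) : Fin m → ℝ :=
  fun j => if ap j = 0 then 1 else 0

lemma isSol_greatestZeroSol (hap : 0 ≤ ap) (h : ∀ j, ap j = 0 ∨ an j ≤ 0) :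
    IsSol hm ap an 0 (greatestZeroSol ap) := by
  refine (isSol_zero_iff hap).2 ⟨fun j => ?_, fun j => ?_⟩
  · by_cases hj : ap j = 0 <;> simp [greatestZeroSol, hj]
  · by_cases hj : ap j = 0
    · simp [greatestZeroSol, hj]
    · simpa [greatestZeroSol, hj] using h j

lemma exists_isSol_zero_iff (hap : 0 ≤ ap) :
    (∃ x, IsSol hm ap an 0 x) ↔ ∀ j, ap j = 0 ∨ an j ≤ 0 := by
  refine ⟨fun ⟨x, hx⟩ j => ?_, fun h => ⟨_, isSol_greatestZeroSol hap h⟩⟩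
  obtain ⟨hzero, hnonpos⟩ := ((isSol_zero_iff hap).1 hx).2 j
  exact hzero.imp_right hnonpos

lemma IsSol.le_greatestZeroSol (hap : 0 ≤ ap) (hx : IsSol hm ap an 0 x) :
    x ≤ greatestZeroSol ap := by
  obtain ⟨hmem, hcoord⟩ := (isSol_zero_iff hap).1 hx
  intro j
  by_cases hj : ap j = 0
  · simpa [greatestZeroSol, hj] using (hmem j).2
  · simpa [greatestZeroSol, hj] using ((hcoord j).1.resolve_left hj).le

theorem stmt7_general (hap : 0 ≤ ap) (hsolv : ∃ x, IsSol hm ap an 0 x) :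
    IsGreatest {x | IsSol hm ap an 0 x} (greatestZeroSol ap) :=
  ⟨isSol_greatestZeroSol hap ((exists_isSol_zero_iff hap).1 hsolv),
    fun _ hx => hx.le_greatestZeroSol hap⟩

end

theorem stmt7 (m : ℕ) (hm : 0 < m) (ap an : Fin m → ℝ)
    (hap : ∀ j, ap j ∈ Set.Icc (0:ℝ) 1) (han : ∀ j, an j ∈ Set.Icc (0:ℝ) 1)
    (hsolv : ∃ x, IsSol hm ap an 0 x) :
    IsSol hm ap an 0 (fun j => if ap j = 0 then (1:ℝ) else 0) ∧
      ∀ x, IsSol hm ap an 0 x → ∀ j, x j ≤ (if ap j = 0 then (1:ℝ) else 0) :=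
  stmt7_general (fun j => (hap j).1) hsolv
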